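/- arXiv:1503.08993 — 3 statements merged into one kernel-verified Lean document; each statement's English description precedes it below -/
import Mathlib

section
/- Let n ≥ 1, let X be a topological space, let h : X → B̄ be a homeomorphism of X onto the closed unit ball B̄ = {v ∈ ℝⁿ : ‖v‖ ≤ 1} of ℝⁿ, and let f : X → ℝⁿ be a continuous map such that ‖f(z) − h(z)‖ ≤ 1 for all z ∈ X. Then there exists a point z ∈ X with f(z) = 0. -/
/-!
By transport along `h`, the claim concerns a continuous map `f` on the unit ball with
`‖f z - z‖ ≤ 1`, and is equivalent to Brouwer's fixed point theorem, which is proved here by the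
method of Milnor and Rogers.

The map `f` extends to a continuous self-map `F` of the whole space that is the identity outside a
ball and has no zeros other than those of `f`. If `F` had no zero, smoothing and normalizing it would
produce a `C¹` map `r` sending a closed ball of radius `R` to its boundary sphere and fixing that
sphere. Let `v` be `r - id` on the ball and `0` outside; it is Lipschitz. For small `c ≥ 0` the map
`id + c v` is a bijection of the space that fixes the complement of the ball, so by the change of
variables formula `∫ det D(id + c v)` over the ball is the volume of the ball. This integral is a
polynomial in `c`, so it equals the volume at `c = 1` too; but there `id + v = r` takes values in the
sphere, so the determinant vanishes identically, a contradiction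
(`no_smooth_retraction`).
-/

open Set Metric MeasureTheory
open scoped NNReal Topology

section Brouwer

theorem image_ball_id_add {E : Type*} [NormedAddCommGroup E] {v : E → E} {R : ℝ}
    (hv : ∀ x, R ≤ ‖x‖ → v x = 0)
    (hb : Function.Bijective fun x => x + v x) :
    (fun x => x + v x) '' ball 0 R = ball 0 R := by
  have hout : ∀ x, R ≤ ‖x‖ → x + v x = x := fun x hx => by rw [hv x hx, add_zero]
  apply Subset.antisymm
  · rintro _ ⟨x, hx, rfl⟩
    by_contra hc
    have h1 : R ≤ ‖x + v x‖ := by simpa using hc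
    have h2 : x + v x = x := hb.1 (hout _ h1)
    exact hc (by simpa only [h2] using hx)
  · intro y hy
    obtain ⟨x, hx⟩ := hb.2 y
    refine ⟨x, ?_, hx⟩
    by_contra hc
    have h1 : R ≤ ‖x‖ := by simpa using hc
    have h2 : x = y := (hout x h1).symm.trans hx
    exact hc (h2 ▸ hy)

variable {E : Type*} [NormedAddCommGroup E] [InnerProductSpace ℝ E]

/-- `t ↦ det (1 + t A)` is a polynomial of degree at most `dim E`, so its values are given by Lagrange
interpolation at more than `dim E` nodes, with coefficients that do not depend on `A`. -/
theorem det_one_add_smul_eq_sum_basis [FiniteDimensional ℝ E] {s : Finset ℝ}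
    (hs : Module.finrank ℝ E < s.card) (A : E →L[ℝ] E) (t : ℝ) :
    (1 + t • A).det = ∑ c ∈ s, (1 + c • A).det * (Lagrange.basis s id c).eval t := by
  classical
  let b := Module.finBasis ℝ E
  let M := LinearMap.toMatrix b b (A : E →ₗ[ℝ] E)
  let p : Polynomial ℝ := Matrix.det
    ((Polynomial.X : Polynomial ℝ) • M.map Polynomial.C + (1 : Matrix _ _ ℝ).map Polynomial.C)
  have hp : ∀ c : ℝ, p.eval c = (1 + c • A).det := by
    intro c
    have h1 : (1 + c • A).det = Matrix.det (1 + c • M) := by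
      change LinearMap.det ((1 + c • A : E →L[ℝ] E) : E →ₗ[ℝ] E) = _
      rw [← LinearMap.det_toMatrix b]
      congr 1
      have : ((1 + c • A : E →L[ℝ] E) : E →ₗ[ℝ] E) = LinearMap.id + c • (A : E →ₗ[ℝ] E) := rfl
      rw [this, map_add, map_smul, LinearMap.toMatrix_id]
    rw [h1, ← Polynomial.coe_evalRingHom, RingHom.map_det]
    congr 1
    ext i j
    simp [Matrix.one_apply, add_comm]
    split_ifs <;> simp [mul_comm]
  have hdeg : p.degree < s.card := by
    refine lt_of_le_of_lt Polynomial.degree_le_natDegree ?_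
    have := Polynomial.natDegree_det_X_add_C_le M 1
    rw [Fintype.card_fin] at this
    exact_mod_cast this.trans_lt hs
  have hL := Lagrange.eq_interpolate (v := id) (Function.injective_id.injOn) hdeg
  rw [← hp t, hL, Lagrange.interpolate_apply, Polynomial.eval_finsetSum]
  simp [hp]

/-- Injectivity holds because `v` contracts distances; a preimage of `y` is a fixed point of the
contraction `x ↦ y - v x`. -/
theorem bijective_id_add [FiniteDimensional ℝ E] {v : E → E} {K : ℝ≥0} (hK : K < 1) (hv : LipschitzWith K v) :
    Function.Bijective fun x => x + v x := by
  constructor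
  · intro x y hxy
    have h1 : x - y = v y - v x := by
      have : x + v x = y + v y := hxy
      rw [sub_eq_sub_iff_add_eq_add, this, add_comm]
    have h2 := hv.dist_le_mul y x
    rw [dist_eq_norm, ← h1, dist_comm, dist_eq_norm] at h2
    have hK' : (K : ℝ) < 1 := hK
    have := norm_nonneg (x - y)
    exact sub_eq_zero.1 (norm_eq_zero.1 (by nlinarith))
  · intro y
    have hc : ContractingWith K fun x => y - v x :=
      ⟨hK, by simpa using (LipschitzWith.const y).sub hv⟩
    refine ⟨ContractingWith.fixedPoint _ hc, ?_⟩
    have := hc.fixedPoint_isFixedPt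
    exact eq_sub_iff_add_eq.1 this.symm

/-- The constant is preserved: a point `x` of the ball lies at distance `R - ‖x‖` from the sphere,
where `w` vanishes, and any point outside the ball is farther away. -/
theorem lipschitzWith_extend_zero [Nontrivial E] {w : E → E} {R : ℝ} (hR : 0 < R) {K : ℝ≥0}
    (hw : LipschitzOnWith K w (closedBall 0 R)) (h0 : ∀ x, ‖x‖ = R → w x = 0) :
    LipschitzWith K ((closedBall (0 : E) R).indicator w) := by
  have key : ∀ x y : E, ‖x‖ ≤ R → R < ‖y‖ → ‖w x‖ ≤ K * dist x y := by
    intro x y hx hy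
    obtain ⟨z, hz, hxz⟩ : ∃ z : E, ‖z‖ = R ∧ dist x z ≤ R - ‖x‖ := by
      by_cases hx0 : x = 0
      · obtain ⟨z, hz⟩ := exists_norm_eq E hR.le
        exact ⟨z, hz, by simp [hx0, hz]⟩
      · have hxn : 0 < ‖x‖ := norm_pos_iff.2 hx0
        refine ⟨(R / ‖x‖) • x, ?_, ?_⟩
        · rw [norm_smul, Real.norm_of_nonneg (by positivity)]
          field_simp
        · have : x - (R / ‖x‖) • x = (1 - R / ‖x‖) • x := by rw [sub_smul, one_smul]
          have h1 : 1 ≤ R / ‖x‖ := (one_le_div hxn).2 hx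
          rw [dist_eq_norm, this, norm_smul, Real.norm_of_nonpos (by linarith)]
          apply le_of_eq
          field_simp
          ring
    have h1 := hw.dist_le_mul x (by simpa using hx) z (by simp [hz])
    rw [h0 z hz, dist_zero_right] at h1
    have h2 : ‖y‖ - ‖x‖ ≤ dist x y := by
      rw [dist_comm, dist_eq_norm]; exact norm_sub_norm_le y x
    exact h1.trans (mul_le_mul_of_nonneg_left (by linarith) K.2)
  refine LipschitzWith.of_dist_le_mul fun x y => ?_
  by_cases hx : x ∈ closedBall (0 : E) R <;> by_cases hy : y ∈ closedBall (0 : E) R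
  · simpa [hx, hy, -mem_closedBall] using hw.dist_le_mul x hx y hy
  · rw [indicator_of_mem hx, indicator_of_notMem hy, dist_zero_right]
    exact key x y (by simpa using hx) (by simpa using hy)
  · rw [indicator_of_notMem hx, indicator_of_mem hy, dist_zero_left, dist_comm]
    exact key y x (by simpa using hy) (by simpa using hx)
  · simp only [indicator_of_notMem hx, indicator_of_notMem hy, dist_self]
    positivity

/-- Differentiating `‖r‖² = R²` shows that the range of the derivative is orthogonal to `r x ≠ 0`. -/
theorem det_fderiv_eq_zero_of_norm_eq [FiniteDimensional ℝ E] [Nontrivial E] {r : E → E} {R : ℝ} (hR : 0 < R) {x : E}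
    (hr : DifferentiableAt ℝ r x) (hn : ∀ᶠ y in 𝓝 x, ‖r y‖ = R) : (fderiv ℝ r x).det = 0 := by
  by_contra hdet
  have hsurj : Function.Surjective (fderiv ℝ r x) := by
    have hu : IsUnit (LinearMap.det (fderiv ℝ r x : E →ₗ[ℝ] E)) := isUnit_iff_ne_zero.2 hdet
    exact ((Module.End.isUnit_iff _).1 ((LinearMap.isUnit_iff_isUnit_det _).2 hu)).2
  have h1 : HasFDerivAt (fun y => ‖r y‖ ^ 2) (2 • (innerSL ℝ (r x)).comp (fderiv ℝ r x)) x :=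
    hr.hasFDerivAt.norm_sq
  have h2 : HasFDerivAt (fun y => ‖r y‖ ^ 2) (0 : E →L[ℝ] ℝ) x :=
    (hasFDerivAt_const (R ^ 2) x).congr_of_eventuallyEq
      (hn.mono fun y hy => by simp only [hy])
  obtain ⟨w, hw⟩ := hsurj (r x)
  have h3 := DFunLike.congr_fun (h1.unique h2) w
  have h4 : ‖r x‖ = R := hn.self_of_nhds
  simp [hw, h4, hR.ne'] at h3

/-- There is no `C¹` retraction of a closed ball onto its boundary sphere. With `v = r - id` on the
ball and `v = 0` outside, the integral over the ball of `det D(id + c v)` is a polynomial in `c`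
equal to the volume of the ball for small `c ≥ 0`, hence also at `c = 1`, where the integrand
vanishes. -/
theorem no_smooth_retraction [FiniteDimensional ℝ E] [Nontrivial E] {r : E → E} {R : ℝ} (hR : 0 < R)
    (hr : ContDiff ℝ 1 r) (hn : ∀ x, ‖x‖ ≤ R → ‖r x‖ = R) (hid : ∀ x, ‖x‖ = R → r x = x) :
    False := by
  borelize E
  let A : E → E →L[ℝ] E := fun x => fderiv ℝ r x - 1
  have hA : Continuous A := (hr.continuous_fderiv one_ne_zero).sub continuous_const
  let w : E → E := fun x => r x - x
  have hwc : ContDiff ℝ 1 w := hr.sub contDiff_id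
  have hwA : ∀ x, HasFDerivAt w (A x) x := fun x =>
    ((hr.differentiable one_ne_zero) x).hasFDerivAt.sub (hasFDerivAt_id x)
  obtain ⟨K, hK⟩ := hwc.contDiffOn.exists_lipschitzOnWith (s := closedBall (0 : E) R)
    one_ne_zero (convex_closedBall _ _) (isCompact_closedBall _ _)
  let v : E → E := (closedBall (0 : E) R).indicator w
  have hv : LipschitzWith K v := lipschitzWith_extend_zero hR hK fun x hx => by
    simp only [w, hid x hx, sub_self]
  have hv0 : ∀ x, R ≤ ‖x‖ → v x = 0 := by
    intro x hx
    rcases hx.eq_or_lt with h | h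
    · exact indicator_apply_eq_zero.2 fun _ => sub_eq_zero.2 (hid x h.symm)
    · exact indicator_of_notMem (by simpa using h) _
  have hvA : ∀ x ∈ ball (0 : E) R, HasFDerivAt v (A x) x := by
    intro x hx
    refine (hwA x).congr_of_eventuallyEq ?_
    filter_upwards [isOpen_ball.mem_nhds hx] with y hy
    exact indicator_of_mem (ball_subset_closedBall hy) _
  -- a uniform bound on `A` makes `1 + c • A x` close to `1`, hence of positive determinant
  obtain ⟨C, hC⟩ := (isCompact_closedBall (0 : E) R).exists_bound_of_continuousOn hA.continuousOn
  obtain ⟨δ, hδ, hδpos⟩ : ∃ δ > 0, ∀ B : E →L[ℝ] E, ‖B‖ < δ → 0 < (1 + B).det := by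
    have h1 : Continuous fun B : E →L[ℝ] E => (1 + B).det :=
      ContinuousLinearMap.continuous_det.comp (continuous_const.add continuous_id)
    have h2 : ∀ᶠ B in 𝓝 (0 : E →L[ℝ] E), 0 < (1 + B).det := by
      refine h1.continuousAt.eventually (lt_mem_nhds ?_)
      have : (1 + 0 : E →L[ℝ] E).det = 1 := by
        rw [add_zero]; exact LinearMap.det_id
      exact one_pos.trans_eq this.symm
    obtain ⟨δ, hδ, h⟩ := Metric.eventually_nhds_iff.1 h2
    exact ⟨δ, hδ, fun B hB => h (by simpa using hB)⟩
  obtain ⟨ε, hε, hεK, hεC⟩ : ∃ ε : ℝ, 0 < ε ∧ ε * K < 1 ∧ ε * C < δ := by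
    have h1 : ∀ᶠ ε : ℝ in 𝓝 (0 : ℝ), ε * (K : ℝ) < 1 :=
      (by fun_prop : Continuous fun ε : ℝ => ε * (K : ℝ)).continuousAt.eventually
        (gt_mem_nhds (by simp))
    have h2 : ∀ᶠ ε in 𝓝 (0 : ℝ), ε * C < δ :=
      (by fun_prop : Continuous fun ε : ℝ => ε * C).continuousAt.eventually
        (gt_mem_nhds (by simpa using hδ))
    obtain ⟨ε, ⟨h1, h2⟩, h3⟩ :=
      (((h1.and h2).filter_mono nhdsWithin_le_nhds).and
        (self_mem_nhdsWithin : Ioi (0 : ℝ) ∈ 𝓝[>] 0)).exists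
    exact ⟨ε, h3, h1, h2⟩
  have hC0 : 0 ≤ C := (norm_nonneg _).trans (hC 0 (by simp [hR.le]))
  have hvol : ∀ c ∈ Icc 0 ε,
      ∫ x in ball (0 : E) R, (1 + c • A x).det = volume.real (ball (0 : E) R) := by
    intro c hc
    have hcv : LipschitzWith (‖c‖₊ * K) fun x => c • v x := by
      exact (lipschitzWith_smul c).comp hv
    have hlt : ‖c‖₊ * K < 1 := by
      rw [← NNReal.coe_lt_coe]
      push_cast
      rw [Real.norm_of_nonneg hc.1]
      exact (mul_le_mul_of_nonneg_right hc.2 K.2).trans_lt hεK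
    have hb := bijective_id_add hlt hcv
    have himg := image_ball_id_add (v := fun x => c • v x) (R := R)
      (fun x hx => by simp only [hv0 x hx, smul_zero]) hb
    have hcov := integral_image_eq_integral_abs_det_fderiv_smul (μ := (volume : Measure E))
      (f := fun x => x + c • v x) (f' := fun x => 1 + c • A x) (s := ball (0 : E) R)
      measurableSet_ball
      (fun x hx => ((hasFDerivAt_id x).add ((hvA x hx).const_smul c)).hasFDerivWithinAt)
      hb.1.injOn (fun _ => (1 : ℝ))
    rw [himg] at hcov
    have : ∫ x in ball (0 : E) R, (1 + c • A x).det =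
        ∫ x in ball (0 : E) R, |(1 + c • A x).det| • (1 : ℝ) := by
      refine setIntegral_congr_fun measurableSet_ball fun x hx => ?_
      have hpos : 0 < (1 + c • A x).det := by
        apply hδpos
        rw [norm_smul, Real.norm_of_nonneg hc.1]
        exact (mul_le_mul hc.2 (hC x (ball_subset_closedBall hx)) (norm_nonneg _) hε.le).trans_lt hεC
      simp only [abs_of_pos hpos, smul_eq_mul, mul_one]
    rw [this, ← hcov]
    simp
  -- interpolate the polynomial `c ↦ det (1 + c A)` at `dim E + 1` nodes in `[0, ε]`
  obtain ⟨s, hsub, hs⟩ := (Icc_infinite hε).exists_subset_card_eq (Module.finrank ℝ E + 1)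
  have hs' : Module.finrank ℝ E < s.card := by omega
  have hint : ∀ c : ℝ, IntegrableOn (fun x => (1 + c • A x).det) (ball (0 : E) R) := by
    intro c
    have hcont : Continuous fun x => (1 + c • A x).det :=
      ContinuousLinearMap.continuous_det.comp (continuous_const.add (hA.const_smul c))
    exact (hcont.continuousOn.integrableOn_compact
      (isCompact_closedBall (0 : E) R)).mono_set ball_subset_closedBall
  have hone : ∫ x in ball (0 : E) R, (1 + (1 : ℝ) • A x).det = volume.real (ball (0 : E) R) := by
    simp_rw [det_one_add_smul_eq_sum_basis hs' _ (1 : ℝ)]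
    rw [integral_finsetSum _ fun c _ => (hint c).mul_const _]
    have : ∀ c ∈ s, ∫ x in ball (0 : E) R,
        (1 + c • A x).det * (Lagrange.basis s id c).eval 1 =
        volume.real (ball (0 : E) R) * (Lagrange.basis s id c).eval 1 := fun c hc => by
      rw [integral_mul_const, hvol c (hsub hc)]
    rw [Finset.sum_congr rfl this, ← Finset.mul_sum, ← Polynomial.eval_finsetSum,
      Lagrange.sum_basis Function.injective_id.injOn (Finset.card_pos.1 (by omega)),
      Polynomial.eval_one, mul_one]
  have hzero : ∫ x in ball (0 : E) R, (1 + (1 : ℝ) • A x).det = 0 := by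
    refine setIntegral_eq_zero_of_forall_eq_zero fun x hx => ?_
    have : 1 + (1 : ℝ) • A x = fderiv ℝ r x := by simp [A]
    rw [this]
    refine det_fderiv_eq_zero_of_norm_eq hR (hr.differentiable one_ne_zero x) ?_
    filter_upwards [isOpen_ball.mem_nhds hx] with y hy
    exact hn y (by simpa using (ball_subset_closedBall hy))
  have hpos : 0 < volume.real (ball (0 : E) R) :=
    ENNReal.toReal_pos (measure_ball_pos _ _ hR).ne' measure_ball_lt_top.ne
  exact hpos.ne' (hone.symm.trans hzero)

/-- If `F` had no zero, a smooth approximation `g` of `F` with `‖g x - F x‖ < ‖F x‖`, still equal to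
the identity far out, would give the smooth retraction `x ↦ R g x / ‖g x‖`. -/
theorem exists_zero_of_eq_id_outside [FiniteDimensional ℝ E] [Nontrivial E] {F : E → E} (hF : Continuous F) {ρ : ℝ}
    (hρ : 0 < ρ) (hid : ∀ x, ρ ≤ ‖x‖ → F x = x) : ∃ x, F x = 0 := by
  by_contra! hne
  let R := ρ + 1
  have hR : 0 < R := by positivity
  obtain ⟨g, hg, hgF, hgS, -⟩ := hF.exists_contDiff_approx_and_eqOn 1
    (ε := fun x => ‖F x‖) hF.norm (fun x => norm_pos_iff.2 (hne x))
    (S := {x | R ≤ ‖x‖}) (U := {x | ρ < ‖x‖})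
    (isClosed_le continuous_const continuous_norm)
    ((isOpen_lt continuous_const continuous_norm).mem_nhdsSet.2
      fun x (hx : R ≤ ‖x‖) => (lt_add_one ρ).trans_le hx)
    (contDiffOn_id.congr fun x hx => hid x (le_of_lt hx))
  have hg0 : ∀ x, g x ≠ 0 := fun x h => by
    have := hgF x
    rw [h, dist_zero_left] at this
    exact lt_irrefl _ this
  refine no_smooth_retraction (r := fun x => (R * ‖g x‖⁻¹) • g x) hR ?_ ?_ ?_
  · have h1 : ContDiff ℝ 1 fun x => ‖g x‖ := ContDiff.norm ℝ hg hg0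
    exact (contDiff_const.mul (h1.inv fun x => norm_ne_zero_iff.2 (hg0 x))).smul hg
  · intro x _
    have : ‖g x‖ ≠ 0 := norm_ne_zero_iff.2 (hg0 x)
    rw [norm_smul, norm_mul, norm_inv, norm_norm, Real.norm_of_nonneg hR.le]
    field_simp
  · intro x hx
    have h1 : g x = x := (hgS hx.ge).trans (hid x (by linarith [lt_add_one ρ]))
    simp only [h1, hx, mul_inv_cancel₀ hR.ne', one_smul]

/-- The main theorem for the identity homeomorphism. The displacement `f - id`, precomposed with the
radial projection onto the ball and damped by a cutoff `χ` supported in radius `2`, is added to the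
identity; for `‖x‖ > 1` the result cannot vanish since the added term has norm at most `χ x < 1`. -/
theorem exists_zero_of_norm_sub_le_one [FiniteDimensional ℝ E] [Nontrivial E]
    (f : closedBall (0 : E) 1 → E) (hf : Continuous f) (hfb : ∀ z, ‖f z - z‖ ≤ 1) : ∃ z, f z = 0 := by
  let p : E → closedBall (0 : E) 1 := fun x => ⟨(max 1 ‖x‖)⁻¹ • x, by
    rw [mem_closedBall_zero_iff, norm_smul, norm_inv,
      Real.norm_of_nonneg (zero_le_one.trans (le_max_left _ _)), inv_mul_le_iff₀ (by positivity),
      mul_one]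
    exact le_max_right _ _⟩
  have hp : Continuous p := by
    refine Continuous.subtype_mk (Continuous.smul (Continuous.inv₀ (by fun_prop) fun x => ?_)
      continuous_id) _
    positivity
  have hpid : ∀ x (hx : ‖x‖ ≤ 1), p x = ⟨x, by simpa using hx⟩ := fun x hx =>
    Subtype.ext (by simp [p, max_eq_left hx])
  let χ : E → ℝ := fun x => max 0 (min 1 (2 - ‖x‖))
  have hχ : Continuous χ := by fun_prop
  obtain ⟨x, hx⟩ := exists_zero_of_eq_id_outside (ρ := 2)
    (F := fun x => x + χ x • (f (p x) - p x)) (by fun_prop) two_pos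
    (fun x hx => by
      have : χ x = 0 := max_eq_left ((min_le_right _ _).trans (by linarith))
      simp only [this, zero_smul, add_zero])
  have hx1 : ‖x‖ ≤ 1 := by
    by_contra! h
    have h1 : χ x < 1 := max_lt one_pos ((min_le_right _ _).trans_lt (by linarith))
    have h0 : 0 ≤ χ x := le_max_left _ _
    have h2 : ‖x‖ = χ x * ‖f (p x) - p x‖ := by
      have h3 := congrArg norm (eq_neg_of_add_eq_zero_left hx)
      rwa [norm_neg, norm_smul, Real.norm_of_nonneg h0] at h3
    nlinarith [hfb (p x)]
  refine ⟨p x, ?_⟩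
  have h1 : χ x = 1 := by
    simp only [χ]
    rw [min_eq_left (by linarith), max_eq_right zero_le_one]
  have h2 : (p x : E) = x := by rw [hpid x hx1]
  simpa [h1, h2] using hx

end Brouwer

/-- If `h` is a homeomorphism of `X` onto the closed unit ball of `ℝⁿ` (`n ≥ 1`) and
`f : X → ℝⁿ` is continuous with `‖f z − h z‖ ≤ 1` for all `z`, then `f` has a zero.
(An application of the Brouwer Fixed Point Theorem.) -/
theorem exists_zero_of_close_to_ball_homeomorph
    {n : ℕ} (hn : 1 ≤ n) {X : Type*} [TopologicalSpace X]
    (h : X ≃ₜ (Metric.closedBall (0 : EuclideanSpace ℝ (Fin n)) 1))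
    (f : X → EuclideanSpace ℝ (Fin n)) (hf : Continuous f)
    (hfb : ∀ z : X, ‖f z - (h z : EuclideanSpace ℝ (Fin n))‖ ≤ 1) :
    ∃ z : X, f z = 0 := by
  have : Nontrivial (EuclideanSpace ℝ (Fin n)) := by
    have : Nonempty (Fin n) := ⟨⟨0, hn⟩⟩
    infer_instance
  obtain ⟨z, hz⟩ := exists_zero_of_norm_sub_le_one (fun z => f (h.symm z))
    (hf.comp h.symm.continuous) (fun z => by simpa using hfb (h.symm z))
  exact ⟨h.symm z, hz⟩
end

section
/- Let M and N be topological n-manifolds without boundary and let f : M → N be a continuous injective map. Then f is an open map, and hence an open topological embedding. -/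
/-!
Charts reduce the claim to Euclidean space: if `f` is continuous and injective on a closed ball
around `a`, then the image of that ball is a neighborhood of `f a`
(`image_closedBall_mem_nhds`). The argument for this is Kulpa's, in the form given by Tao. Let
`B` be the closed unit ball and let `G` be a Tietze extension to the whole space of the inverse of
`f : B → f(B)`. Any `Q` that is uniformly close to `G` on `f(B)` has a zero there, because
`x ↦ Q (f x)` is close to the identity of `B` (`exists_zero_of_near_id`, a form of Brouwer's fixed
point theorem). If `f 0` were not interior to `f(B)`, one could pick `c ∉ f(B)` near `f 0`, push
the part of `f(B)` close to `c` radially onto a small sphere around `c`, and compose with a smooth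
approximation of `G`. A sphere is a null set and so is its image under a smooth map, so a small
translation makes the approximation nonvanishing on the sphere. It has no zero on the rest
of `f(B)` either, which contradicts the stability of zeros.

The stability of zeros follows from the nonexistence of a `C¹` map `r` into the unit sphere
fixing the unit sphere pointwise (`no_retraction`), which is proved by Milnor's and Rogers's volume
argument. For small `t > 0` the map `x ↦ x + t (r x - x)` is a diffeomorphism of the open unit ball,
so the integral of its Jacobian determinant `det (1 + t (Dr - 1))` is the volume of the ball
(`integral_det_eq_volume_of_small`). The determinant is a polynomial in `t`, so Lagrange
interpolation gives the same integral at `t = 1`; but there the determinant is `det Dr`, which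
vanishes identically since `r` takes values in a sphere.
-/

/-- A topological `n`-manifold without boundary: every point has an open
neighborhood homeomorphic to an open subset of `ℝⁿ`. (Paracompactness and
Hausdorffness are imposed as instance hypotheses.) -/
def IsTopManifold (n : ℕ) (M : Type*) [TopologicalSpace M] : Prop :=
  ∀ x : M, ∃ (U : Set M) (V : Set (EuclideanSpace ℝ (Fin n))),
    IsOpen U ∧ x ∈ U ∧ IsOpen V ∧ Nonempty (U ≃ₜ V)

/-- The closed half-space `ℝⁿ₊ = {x ∈ ℝⁿ : xₙ ≥ 0}` (the last coordinate is
nonnegative). -/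
def halfSpace (n : ℕ) : Set (EuclideanSpace ℝ (Fin n)) :=
  {x | ∀ i : Fin n, (i : ℕ) = n - 1 → 0 ≤ x i}

/-- A topological `n`-manifold with boundary: every point has an open neighborhood
admitting an open topological embedding into the half-space `ℝⁿ₊`. -/
def IsTopManifoldWithBoundary (n : ℕ) (M : Type*) [TopologicalSpace M] : Prop :=
  ∀ x : M, ∃ (U : Set M) (f : M → EuclideanSpace ℝ (Fin n)),
    IsOpen U ∧ x ∈ U ∧ Set.MapsTo f U (halfSpace n) ∧ Set.InjOn f U ∧ ContinuousOn f U ∧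
    ∀ V ⊆ U, IsOpen V →
      ∃ W : Set (EuclideanSpace ℝ (Fin n)), IsOpen W ∧ f '' V = W ∩ halfSpace n

/-- The boundary `∂M` of a manifold with boundary: points having no open
neighborhood homeomorphic to `ℝⁿ`. -/
def manifoldBoundary (n : ℕ) (M : Type*) [TopologicalSpace M] : Set M :=
  {x | ¬ ∃ U : Set M, IsOpen U ∧ x ∈ U ∧ Nonempty (U ≃ₜ EuclideanSpace ℝ (Fin n))}

section Brouwer

/-! ### Jacobian determinants of perturbations of the identity -/

open Set Metric MeasureTheory Filter Topology

variable {E : Type*} [NormedAddCommGroup E] [InnerProductSpace ℝ E] [FiniteDimensional ℝ E]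

/-- `det (1 + t A)` is a polynomial in `t` of degree at most `dim E`, so its value at `t = 1` is
the Lagrange interpolation of its values at any `dim E + 1` nodes. The weights do not depend
on `A`. -/
theorem det_one_add_interpolate (τ : Fin (Module.finrank ℝ E + 1) → ℝ)
    (hτ : Function.Injective τ) (A : E →L[ℝ] E) :
    (1 + A).det = ∑ i, (Lagrange.basis Finset.univ τ i).eval 1 * (1 + τ i • A).det := by
  let b := Module.finBasis ℝ E
  let M := LinearMap.toMatrix b b (A : E →ₗ[ℝ] E)
  let p : Polynomial ℝ := ((Polynomial.X : Polynomial ℝ) • M.map Polynomial.C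
    + (1 : Matrix _ _ ℝ).map Polynomial.C).det
  have hp : ∀ t : ℝ, (1 + t • A).det = p.eval t := by
    intro t
    rw [ContinuousLinearMap.det, ← LinearMap.det_toMatrix b, ← Polynomial.coe_evalRingHom,
      RingHom.map_det]
    congr 1
    have : ((1 + t • A : E →L[ℝ] E) : E →ₗ[ℝ] E) = LinearMap.id + t • (A : E →ₗ[ℝ] E) := by
      ext; simp
    rw [this]
    simp only [map_add, LinearMap.toMatrix_id, map_smul]
    ext i j
    by_cases hij : i = j
    · subst hij
      simp [M]
      ring
    · simp [M, hij]
      ring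
  have hdeg : p.degree < (Finset.univ : Finset (Fin (Module.finrank ℝ E + 1))).card := by
    refine lt_of_le_of_lt Polynomial.degree_le_natDegree ?_
    have h := Polynomial.natDegree_det_X_add_C_le M 1
    simp only [Finset.card_univ, Fintype.card_fin] at h ⊢
    exact_mod_cast Nat.lt_succ_of_le h
  have h1 := hp 1
  rw [one_smul] at h1
  rw [h1, Lagrange.eq_interpolate (v := τ) hτ.injOn hdeg, Lagrange.interpolate_apply,
    Polynomial.eval_finsetSum]
  refine Finset.sum_congr rfl fun i _ => ?_
  rw [← hp, Polynomial.eval_mul, Polynomial.eval_C, mul_comm, hp]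

theorem sum_interpolate (k : ℕ) (τ : Fin (k + 1) → ℝ) (hτ : Function.Injective τ) :
    ∑ i, (Lagrange.basis Finset.univ τ i).eval 1 = 1 := by
  rw [← Polynomial.eval_finsetSum, Lagrange.sum_basis hτ.injOn Finset.univ_nonempty,
    Polynomial.eval_one]

theorem det_one_add_ne_zero {A : E →L[ℝ] E} (hA : ‖A‖ < 1) : (1 + A).det ≠ 0 := by
  have h : IsUnit (1 + A) := by simpa using isUnit_one_sub_of_norm_lt_one (x := -A) (by simpa)
  obtain ⟨B, hB⟩ := h.exists_right_inv
  intro h0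
  have h1 := congrArg ContinuousLinearMap.det hB
  have h2 : ((1 + A) * B).det = (1 + A).det * B.det := by
    simp only [ContinuousLinearMap.det]
    rw [← LinearMap.det_comp]
    rfl
  have h3 : (1 : E →L[ℝ] E).det = 1 := by simp [ContinuousLinearMap.det]
  rw [h2, h0, zero_mul, h3] at h1
  exact zero_ne_one h1

theorem det_one_add_pos {A : E →L[ℝ] E} (hA : ‖A‖ < 1) : 0 < (1 + A).det := by
  by_contra! hle
  -- the determinant would vanish somewhere on the connected set `{1 + B | ‖B‖ < 1}`
  have hc : ContinuousOn (fun B : E →L[ℝ] E => (1 + B).det) (ball 0 1) :=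
    (ContinuousLinearMap.continuous_det.comp (continuous_const.add continuous_id)).continuousOn
  have hpre : IsPreconnected (ball (0 : E →L[ℝ] E) 1) := (convex_ball _ _).isPreconnected
  have := hpre.intermediate_value (a := A) (b := 0) (by simpa) (by simp) hc
  have h0 : ((1 : E →L[ℝ] E) + 0).det = 1 := by
    simp [ContinuousLinearMap.det]
  obtain ⟨B, hB, hB0⟩ := this ⟨hle, by rw [h0]; exact zero_le_one⟩
  exact det_one_add_ne_zero (by simpa using hB) hB0

/-! ### Nonexistence of a smooth retraction onto the sphere -/

variable [MeasurableSpace E] [BorelSpace E]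

/-- For small `t > 0` the map `g x = x + t (r x - x)` is a diffeomorphism of the open unit ball onto
itself: it is injective because `r - id` is Lipschitz, and its image is open by the inverse
function theorem and relatively closed because `g` fixes the boundary. The change of variables
formula then computes the integral of its Jacobian. -/
theorem integral_det_eq_volume_of_small {r : E → E} (hr : ContDiff ℝ 1 r)
    (hmap : ∀ x ∈ closedBall (0 : E) 1, ‖r x‖ ≤ 1)
    (hid : ∀ x ∈ sphere (0 : E) 1, r x = x) :
    ∃ T : ℝ, 0 < T ∧ ∀ t ∈ Ioo 0 T,
      ∫ x in ball (0 : E) 1, (1 + t • (fderiv ℝ r x - 1)).det = volume.real (ball (0 : E) 1) := by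
  set D : E → E →L[ℝ] E := fun x => fderiv ℝ r x - 1
  have hDc : Continuous D := (hr.continuous_fderiv (by norm_num)).sub continuous_const
  have hrd : Differentiable ℝ r := hr.differentiable (by norm_num)
  have hgD : ∀ x, HasFDerivAt (fun x => r x - x) (D x) x := fun x =>
    (hrd x).hasFDerivAt.sub (hasFDerivAt_id x)
  obtain ⟨C, hC⟩ := (isCompact_closedBall (0 : E) 1).exists_bound_of_continuousOn hDc.continuousOn
  have hC0 : 0 ≤ C := (norm_nonneg _).trans (hC 0 (by simp))
  have hlip : ∀ x ∈ closedBall (0 : E) 1, ∀ y ∈ closedBall (0 : E) 1,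
      ‖(r y - y) - (r x - x)‖ ≤ C * ‖y - x‖ := fun x hx y hy =>
    (convex_closedBall (0 : E) 1).norm_image_sub_le_of_norm_hasFDerivWithin_le
      (f := fun x => r x - x) (fun z hz => (hgD z).hasFDerivWithinAt) hC hx hy
  refine ⟨min 1 (1 / (C + 1)), by positivity, fun t ht => ?_⟩
  have ht0 : 0 < t := ht.1
  have ht1 : t < 1 := ht.2.trans_le (min_le_left _ _)
  have htC : t * C < 1 := by
    have := ht.2.trans_le (min_le_right _ _)
    rw [lt_div_iff₀ (by positivity)] at this
    nlinarith
  set g : E → E := fun x => x + t • (r x - x)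
  have hg' : ∀ x, HasFDerivAt g (1 + t • D x) x := fun x =>
    (hasFDerivAt_id x).add ((hgD x).const_smul t)
  have hgcd : ContDiff ℝ 1 g := contDiff_id.add ((hr.sub contDiff_id).const_smul t)
  have hnorm : ∀ x ∈ closedBall (0 : E) 1, ‖t • D x‖ < 1 := fun x hx => by
    rw [norm_smul, Real.norm_of_nonneg ht0.le]
    exact (mul_le_mul_of_nonneg_left (hC x hx) ht0.le).trans_lt htC
  have hinj : InjOn g (closedBall 0 1) := by
    intro x hx y hy hxy
    have h1 : y - x = - (t • ((r y - y) - (r x - x))) := by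
      simp only [g] at hxy
      rw [smul_sub, neg_sub, sub_eq_sub_iff_add_eq_add, add_comm (t • (r x - x)) x, hxy]
    have h2 : ‖y - x‖ ≤ t * C * ‖y - x‖ := by
      conv_lhs => rw [h1]
      rw [norm_neg, norm_smul, Real.norm_of_nonneg ht0.le, mul_assoc]
      exact mul_le_mul_of_nonneg_left (hlip x hx y hy) ht0.le
    have h3 : ‖y - x‖ = 0 := by nlinarith [norm_nonneg (y - x)]
    exact (sub_eq_zero.mp (norm_eq_zero.mp h3)).symm
  have hmaps : ∀ x ∈ ball (0 : E) 1, g x ∈ ball (0 : E) 1 := by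
    intro x hx
    rw [mem_ball_zero_iff] at hx ⊢
    have hgx : g x = (1 - t) • x + t • r x := by
      simp only [g]; module
    rw [hgx]
    calc ‖(1 - t) • x + t • r x‖ ≤ ‖(1 - t) • x‖ + ‖t • r x‖ := norm_add_le _ _
      _ = (1 - t) * ‖x‖ + t * ‖r x‖ := by
        rw [norm_smul, norm_smul, Real.norm_of_nonneg ht0.le, Real.norm_of_nonneg (by linarith)]
      _ < 1 := by nlinarith [hmap x (by simpa using hx.le)]
  have hopen : IsOpen (g '' ball 0 1) := by
    rw [isOpen_iff_mem_nhds]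
    rintro _ ⟨x, hx, rfl⟩
    have hs : HasStrictFDerivAt g (1 + t • D x) x :=
      hgcd.contDiffAt.hasStrictFDerivAt' (hg' x) (by norm_num)
    have hunit : IsUnit (1 + t • D x) := by
      simpa using isUnit_one_sub_of_norm_lt_one (x := -(t • D x))
        (by simpa using hnorm x (ball_subset_closedBall hx))
    have hsurj : (1 + t • D x).range = ⊤ := by
      obtain ⟨u, hu⟩ := hunit
      rw [LinearMap.range_eq_top]
      intro y
      refine ⟨(↑u⁻¹ : E →L[ℝ] E) y, ?_⟩
      rw [← hu]
      change ((↑u : E →L[ℝ] E) * (↑u⁻¹ : E →L[ℝ] E)) y = y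
      simp
    rw [← hs.map_nhds_eq_of_surj hsurj]
    exact image_mem_map (isOpen_ball.mem_nhds hx)
  have himage : g '' ball 0 1 = ball 0 1 := by
    have hsub : g '' ball 0 1 ⊆ ball 0 1 := by
      rintro _ ⟨x, hx, rfl⟩; exact hmaps x hx
    refine hsub.antisymm ?_
    have hK : IsCompact (g '' closedBall 0 1) :=
      (isCompact_closedBall _ _).image hgcd.continuous
    -- boundary points are fixed, so an interior value is attained at an interior point
    have hKb : ∀ y ∈ ball (0 : E) 1, y ∈ g '' closedBall 0 1 → y ∈ g '' ball 0 1 := by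
      rintro _ hy ⟨x, hx, rfl⟩
      by_cases hxs : x ∈ sphere (0 : E) 1
      · exfalso
        have : g x = x := by simp [g, hid x hxs]
        rw [this] at hy
        rw [mem_sphere] at hxs
        rw [mem_ball] at hy
        exact hy.ne hxs
      · refine ⟨x, ?_, rfl⟩
        rw [mem_ball]
        rw [mem_closedBall] at hx
        exact lt_of_le_of_ne hx hxs
    have hpre : IsPreconnected (ball (0 : E) 1) := (convex_ball _ _).isPreconnected
    refine hpre.subset_of_closure_inter_subset hopen ⟨g 0, hmaps 0 (by simp), 0, by simp, rfl⟩ ?_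
    rintro y ⟨hy1, hy2⟩
    exact hKb y hy2 (closure_minimal (image_mono ball_subset_closedBall) hK.isClosed hy1)
  have hcv := integral_image_eq_integral_abs_det_fderiv_smul volume
    (measurableSet_ball (x := (0 : E)) (ε := 1)) (f := g) (f' := fun x => 1 + t • D x)
    (fun x _ => (hg' x).hasFDerivWithinAt) (hinj.mono ball_subset_closedBall) (fun _ => (1 : ℝ))
  rw [himage] at hcv
  have : ∫ x in ball (0 : E) 1, (1 + t • D x).det
      = ∫ x in ball (0 : E) 1, |(1 + t • D x).det| • (1 : ℝ) := by
    refine setIntegral_congr_fun measurableSet_ball fun x hx => ?_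
    simp only [smul_eq_mul, mul_one]
    rw [abs_of_pos (det_one_add_pos (hnorm x (ball_subset_closedBall hx)))]
  rw [this, ← hcv]
  simp

/-- The closed unit ball has no `C¹` retraction onto its boundary. For convenience the map `r` is
defined on the whole space, with values in the unit sphere. -/
theorem no_retraction {r : E → E} (hr : ContDiff ℝ 1 r)
    (hnorm : ∀ x, ‖r x‖ = 1) (hid : ∀ x ∈ sphere (0 : E) 1, r x = x) : False := by
  obtain ⟨T, hT, hTt⟩ := integral_det_eq_volume_of_small hr (fun x _ => (hnorm x).le) hid
  set k := Module.finrank ℝ E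
  let τ : Fin (k + 1) → ℝ := fun i => T / (i + 2)
  have hτ : Function.Injective τ := by
    intro i j hij
    simp only [τ] at hij
    have hi : (0 : ℝ) < (i : ℕ) + 2 := by positivity
    have hj : (0 : ℝ) < (j : ℕ) + 2 := by positivity
    rw [div_eq_div_iff hi.ne' hj.ne'] at hij
    have := mul_left_cancel₀ hT.ne' hij
    have : ((i : ℕ) : ℝ) = (j : ℕ) := by linarith
    exact Fin.ext (by exact_mod_cast this)
  have hτmem : ∀ i, τ i ∈ Ioo 0 T := fun i => by
    have hi : (0 : ℝ) ≤ (i : ℕ) := Nat.cast_nonneg _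
    refine ⟨by positivity, ?_⟩
    simp only [τ]
    rw [div_lt_iff₀ (by positivity)]
    nlinarith
  have hdc : Continuous (fun x => fderiv ℝ r x) := hr.continuous_fderiv (by norm_num)
  have hdet0 : ∀ x, (1 + (fderiv ℝ r x - 1)).det = 0 := by
    intro x
    rw [add_sub_cancel]
    by_contra hne
    -- `‖r‖` is constant, so `r x` is orthogonal to the range of the derivative
    have hsurj : Function.Surjective (fderiv ℝ r x) := by
      exact (LinearMap.equivOfDetNeZero (fderiv ℝ r x : E →ₗ[ℝ] E) hne).surjective
    obtain ⟨v, hv⟩ := hsurj (r x)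
    have hd := ((hr.differentiable (by norm_num)) x).hasFDerivAt
    have h1 : HasFDerivAt (fun y => inner ℝ (r y) (r y)) _ x := hd.inner ℝ hd
    have h2 : (fun y => inner ℝ (r y) (r y)) = fun _ => (1 : ℝ) := by
      ext y; rw [real_inner_self_eq_norm_sq, hnorm, one_pow]
    rw [h2] at h1
    have h3 := congrArg (fun L => L v) (h1.unique (hasFDerivAt_const (1 : ℝ) x))
    simp [hv, hnorm] at h3
  have hint : ∀ i, IntegrableOn (fun x => (1 + τ i • (fderiv ℝ r x - 1)).det) (ball (0 : E) 1) := by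
    intro i
    have : Continuous (fun x => (1 + τ i • (fderiv ℝ r x - 1)).det) :=
      ContinuousLinearMap.continuous_det.comp (by fun_prop)
    exact (this.continuousOn.integrableOn_compact (isCompact_closedBall (0 : E) 1)).mono_set
      ball_subset_closedBall
  have key : ∫ x in ball (0 : E) 1, (1 + (fderiv ℝ r x - 1)).det
      = volume.real (ball (0 : E) 1) := by
    rw [integral_congr_ae (.of_forall fun x => det_one_add_interpolate τ hτ (fderiv ℝ r x - 1)),
      integral_finsetSum _ (fun i _ => (hint i).const_mul _)]
    simp_rw [integral_const_mul]
    rw [Finset.sum_congr rfl (fun i _ => by rw [hTt (τ i) (hτmem i)]), ← Finset.sum_mul,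
      sum_interpolate k τ hτ, one_mul]
  simp_rw [hdet0] at key
  have hpos : 0 < volume.real (ball (0 : E) 1) :=
    ENNReal.toReal_pos (measure_ball_pos _ _ one_pos).ne' measure_ball_lt_top.ne
  simp at key
  linarith


/-! ### Invariance of domain in Euclidean space -/

/-- A form of Brouwer's fixed point theorem: a continuous map that is close to the identity on the
closed unit ball has a zero. If there were none, interpolating with the identity near the boundary,
smoothing and normalizing would produce a retraction onto the sphere. -/
theorem exists_zero_of_near_id {H : E → E} (hH : ContinuousOn H (closedBall 0 1))
    (hnear : ∀ x ∈ closedBall (0 : E) 1, ‖H x - x‖ < 1 / 2) :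
    ∃ x ∈ closedBall (0 : E) 1, H x = 0 := by
  by_contra! hne
  obtain ⟨G, hG⟩ := ContinuousMap.exists_restrict_eq (X := E) (Y := E) isClosed_closedBall
    ⟨(closedBall (0 : E) 1).domRestrict H, hH.domRestrict⟩
  have hGH : ∀ x ∈ closedBall (0 : E) 1, G x = H x := fun x hx =>
    congrArg (fun F => F ⟨x, hx⟩) hG
  -- a cutoff equal to `1` for `‖x‖ ≤ 1 / 2` and to `0` for `‖x‖ ≥ 3 / 4`
  set χ : E → ℝ := fun x => max 0 (min 1 (3 - 4 * ‖x‖))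
  have hχ0 : ∀ x, 0 ≤ χ x := fun x => le_max_left _ _
  have hχ1 : ∀ x, χ x ≤ 1 := fun x => max_le zero_le_one (min_le_left _ _)
  have hχin : ∀ x, ‖x‖ ≤ 1 / 2 → χ x = 1 := fun x hx => by
    simp only [χ]
    rw [min_eq_left (by linarith), max_eq_right zero_le_one]
  have hχout : ∀ x, 3 / 4 ≤ ‖x‖ → χ x = 0 := fun x hx => by
    simp only [χ]
    exact max_eq_left ((min_le_right _ _).trans (by linarith))
  set K : E → E := fun x => x + χ x • (G x - x)
  have hKc : Continuous K := by
    have : Continuous G := G.continuous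
    simp only [K, χ]
    fun_prop
  have hKout : ∀ x, 3 / 4 ≤ ‖x‖ → K x = x := fun x hx => by simp [K, hχout x hx]
  have hK0 : ∀ x, K x ≠ 0 := by
    intro x
    rcases le_or_gt ‖x‖ (1 / 2) with h1 | h1
    · have hx : x ∈ closedBall (0 : E) 1 := by rw [mem_closedBall_zero_iff]; linarith
      simpa [K, hχin x h1, hGH x hx] using hne x hx
    rcases le_or_gt ‖x‖ 1 with h2 | h2
    · have hx : x ∈ closedBall (0 : E) 1 := by rwa [mem_closedBall_zero_iff]
      intro h0
      have h3 : x = - (χ x • (H x - x)) := by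
        rw [← hGH x hx]; exact eq_neg_of_add_eq_zero_left h0
      have h4 : ‖x‖ = χ x * ‖H x - x‖ := by
        conv_lhs => rw [h3]
        rw [norm_neg, norm_smul, Real.norm_of_nonneg (hχ0 x)]
      nlinarith [hnear x hx, hχ1 x, norm_nonneg (H x - x)]
    · rw [hKout x (by linarith)]
      exact norm_pos_iff.mp (by linarith)
  -- a smooth map closer to `K` than `‖K‖` is nonvanishing; keep `L = id` on the sphere
  obtain ⟨L, hL, hLK, hLeq, -⟩ := hKc.exists_contDiff_approx_and_eqOn 1
    (ε := fun x => ‖K x‖) hKc.norm (fun x => norm_pos_iff.mpr (hK0 x))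
    (S := {x | 1 ≤ ‖x‖}) (U := {x | 3 / 4 < ‖x‖}) (isClosed_le continuous_const continuous_norm)
    ((isOpen_lt continuous_const continuous_norm).mem_nhdsSet.mpr
      fun x (hx : 1 ≤ ‖x‖) => show 3 / 4 < ‖x‖ by linarith)
    (contDiffOn_id.congr fun x (hx : 3 / 4 < ‖x‖) => hKout x hx.le)
  have hL0 : ∀ x, L x ≠ 0 := fun x h0 => by
    have := hLK x
    rw [h0, dist_zero_left] at this
    exact lt_irrefl _ this
  refine no_retraction (r := fun x => ‖L x‖⁻¹ • L x) ?_ ?_ ?_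
  · have hL' : ContDiff ℝ 1 L := by exact_mod_cast hL
    exact ((hL'.norm ℝ hL0).inv fun x => norm_ne_zero_iff.mpr (hL0 x)).smul hL'
  · intro x
    rw [norm_smul, norm_inv, norm_norm, inv_mul_cancel₀ (norm_ne_zero_iff.mpr (hL0 x))]
  · intro x hx
    rw [mem_sphere_zero_iff_norm] at hx
    have : L x = x := (hLeq (show 1 ≤ ‖x‖ from hx.ge)).trans (hKout x (by linarith))
    simp only [this, hx, inv_one, one_smul]

/-- Invariance of domain at the center of the closed unit ball: otherwise the continuous inverse `G`
of `f` could be perturbed to a nonvanishing map on the image, against the stability of the zero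
of `G` at `f 0`. -/
theorem image_unit_closedBall_mem_nhds {f : E → E} (hf : ContinuousOn f (closedBall 0 1))
    (hinj : InjOn f (closedBall 0 1)) : f '' closedBall 0 1 ∈ 𝓝 (f 0) := by
  by_contra hnot
  set B := closedBall (0 : E) 1
  have hBc : IsCompact B := isCompact_closedBall _ _
  have h0B : (0 : E) ∈ B := by simp [B]
  have : CompactSpace B := isCompact_iff_compactSpace.mp hBc
  have hemb : IsClosedEmbedding (B.domRestrict f) :=
    hf.domRestrict.isClosedEmbedding hinj.injective
  obtain ⟨G, hG⟩ := ContinuousMap.exists_extension' (Y := E) hemb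
    ⟨Subtype.val, continuous_subtype_val⟩
  have hGf : ∀ x ∈ B, G (f x) = x := fun x hx => congrFun hG ⟨x, hx⟩
  obtain ⟨δ, hδ, hGδ⟩ := Metric.continuousAt_iff.mp (G.continuous.continuousAt (x := f 0))
    (1 / 10) (by norm_num)
  rw [hGf 0 h0B] at hGδ
  set ε := δ / 2 with hε_def
  have hε : 0 < ε := half_pos hδ
  obtain ⟨c, hc, hcB⟩ : ∃ c, dist c (f 0) < ε ∧ c ∉ f '' B := by
    by_contra! hall
    exact hnot (mem_of_superset (ball_mem_nhds _ hε) fun c hc => hall c hc)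
  have hGsmall : ∀ y, dist y c ≤ ε → ‖G y‖ < 1 / 10 := fun y hy => by
    rw [← dist_zero_right]
    exact hGδ ((dist_triangle _ c _).trans_lt (by linarith))
  -- away from `c` the only zero `f 0` of `G` is avoided, hence `‖G‖` is bounded below there
  have hS : IsCompact (f '' B ∩ {y | ε ≤ dist y c}) :=
    (hBc.image_of_continuousOn hf).inter_right
      (isClosed_le continuous_const (continuous_id.dist continuous_const))
  obtain ⟨m, hm, hmG⟩ := hS.exists_forall_le' (f := fun y => ‖G y‖) (a := 0)
    G.continuous.norm.continuousOn (by
      rintro _ ⟨⟨x, hx, rfl⟩, hy⟩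
      rw [hGf x hx, norm_pos_iff]
      rintro rfl
      rw [mem_ofPred_eq, dist_comm] at hy
      linarith)
  set η := min (m / 2) (1 / 10)
  have hη : 0 < η := by positivity
  have hηm : η ≤ m / 2 := min_le_left _ _
  have hη1 : η ≤ 1 / 10 := min_le_right _ _
  -- `P - v` approximates `G` and has no zero on the sphere: `v` avoids a null set
  obtain ⟨P, hP, hPG, -⟩ := G.continuous.exists_contDiff_approx 1 (ε := fun _ => η)
    continuous_const (fun _ => hη)
  have hnull : volume (P '' sphere c ε) = 0 :=
    addHaar_image_eq_zero_of_differentiableOn_of_addHaar_eq_zero volume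
      (hP.differentiable (by norm_num)).differentiableOn
      (Measure.addHaar_sphere_of_ne_zero _ _ hε.ne')
  obtain ⟨v, hv, hvP⟩ : ∃ v ∈ ball (0 : E) η, v ∉ P '' sphere c ε := by
    by_contra! hall
    exact (measure_ball_pos volume (0 : E) hη).ne' (measure_mono_null hall hnull)
  rw [mem_ball_zero_iff] at hv
  have hQG : ∀ y, ‖(P y - v) - G y‖ < 2 * η := fun y => by
    have h1 := hPG y
    rw [dist_eq_norm] at h1
    calc ‖(P y - v) - G y‖ = ‖(P y - G y) - v‖ := by congr 1; abel
      _ ≤ ‖P y - G y‖ + ‖v‖ := norm_sub_le _ _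
      _ < 2 * η := by linarith
  -- `Φ` fixes the points at distance at least `ε` from `c` and pushes the others to the sphere
  set Φ : E → E := fun y => c + max (ε / ‖y - c‖) 1 • (y - c)
  have hfc : ∀ x ∈ B, f x - c ≠ 0 := fun x hx h => hcB ⟨x, hx, sub_eq_zero.mp h⟩
  have hΦfar : ∀ y, ε ≤ dist y c → Φ y = y := fun y hy => by
    rw [dist_eq_norm] at hy
    have : max (ε / ‖y - c‖) 1 = 1 := max_eq_right (div_le_one_of_le₀ hy (norm_nonneg _))
    simp [Φ, this]
  have hΦnear : ∀ x ∈ B, dist (f x) c < ε → Φ (f x) ∈ sphere c ε := fun x hx hy => by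
    rw [dist_eq_norm] at hy
    have hpos : 0 < ‖f x - c‖ := norm_pos_iff.mpr (hfc x hx)
    have : max (ε / ‖f x - c‖) 1 = ε / ‖f x - c‖ :=
      max_eq_left ((one_le_div hpos).mpr hy.le)
    rw [mem_sphere, dist_eq_norm]
    simp only [Φ, this, add_sub_cancel_left, norm_smul, norm_div, norm_norm,
      Real.norm_of_nonneg hε.le]
    exact div_mul_cancel₀ _ hpos.ne'
  have hΦc : ContinuousOn (fun x => Φ (f x)) B := by
    have h1 : ContinuousOn (fun x => f x - c) B := hf.sub continuousOn_const
    exact continuousOn_const.add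
      (((continuousOn_const.div h1.norm fun x hx => norm_ne_zero_iff.mpr (hfc x hx)).sup
        continuousOn_const).smul h1)
  obtain ⟨x, hx, hx0⟩ := exists_zero_of_near_id (H := fun x => P (Φ (f x)) - v)
    ((hP.continuous.comp_continuousOn hΦc).sub continuousOn_const) (by
      intro x hx
      have hQ := hQG (Φ (f x))
      rcases le_or_gt ε (dist (f x) c) with hd | hd
      · rw [hΦfar _ hd, hGf x hx] at hQ
        simp only [hΦfar _ hd]
        linarith
      · have h1 := hGsmall _ (hΦnear x hx hd).le
        have h2 := hGsmall _ hd.le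
        rw [hGf x hx] at h2
        calc ‖P (Φ (f x)) - v - x‖
            = ‖((P (Φ (f x)) - v) - G (Φ (f x))) + G (Φ (f x)) - x‖ := by congr 1; abel
          _ ≤ ‖(P (Φ (f x)) - v) - G (Φ (f x))‖ + ‖G (Φ (f x))‖ + ‖x‖ :=
            (norm_sub_le _ _).trans (by gcongr; exact norm_add_le _ _)
          _ < 1 / 2 := by linarith)
  rcases le_or_gt ε (dist (f x) c) with hd | hd
  · have hQ := hQG (f x)
    simp only [hΦfar _ hd] at hx0
    rw [hx0, zero_sub, norm_neg] at hQ
    have := hmG (f x) ⟨⟨x, hx, rfl⟩, hd⟩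
    linarith
  · exact hvP ⟨_, hΦnear x hx hd, sub_eq_zero.mp hx0⟩

theorem image_closedBall_mem_nhds {f : E → E} {a : E} {R : ℝ} (hR : 0 < R)
    (hf : ContinuousOn f (closedBall a R)) (hinj : InjOn f (closedBall a R)) :
    f '' closedBall a R ∈ 𝓝 (f a) := by
  set g : E → E := fun x => a + R • x
  have hg : MapsTo g (closedBall 0 1) (closedBall a R) := fun x hx => by
    rw [mem_closedBall_zero_iff] at hx
    rw [mem_closedBall, dist_eq_norm]
    simp only [g, add_sub_cancel_left, norm_smul, Real.norm_of_nonneg hR.le]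
    nlinarith
  have hgc : Continuous g := by fun_prop
  have hginj : Function.Injective g := fun x y hxy =>
    smul_right_injective E hR.ne' (add_left_cancel hxy)
  have h := image_unit_closedBall_mem_nhds (f := f ∘ g) (hf.comp hgc.continuousOn hg)
    (hinj.comp hginj.injOn hg)
  have h0 : (f ∘ g) 0 = f a := by simp [g]
  rw [h0, image_comp] at h
  exact mem_of_superset h (image_mono hg.image_subset)

end Brouwer

/-! ### Passage to manifolds -/

theorem IsTopManifold.exists_chart {n : ℕ} {M : Type*} [TopologicalSpace M]
    (hM : IsTopManifold n M) (x : M) :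
    ∃ p : OpenPartialHomeomorph M (EuclideanSpace ℝ (Fin n)), x ∈ p.source := by
  obtain ⟨U, V, hU, hxU, hV, ⟨h⟩⟩ := hM x
  have : Nonempty U := ⟨⟨x, hxU⟩⟩
  let e₁ := hU.isOpenEmbedding_subtypeVal.toOpenPartialHomeomorph _
  let e₂ := (hV.isOpenEmbedding_subtypeVal.comp h.isOpenEmbedding).toOpenPartialHomeomorph _
  exact ⟨e₁.symm.trans e₂, by simp [e₁, e₂, hxU]⟩

/-- Invariance of domain for manifolds: a continuous injective map between topological
`n`-manifolds without boundary is an open map, hence an open topological embedding. -/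
theorem isOpenMap_isOpenEmbedding_of_continuous_injective
    {n : ℕ} {M N : Type*} [TopologicalSpace M] [T2Space M] [ParacompactSpace M]
    [TopologicalSpace N] [T2Space N] [ParacompactSpace N]
    (hM : IsTopManifold n M) (hN : IsTopManifold n N)
    (f : M → N) (hf : Continuous f) (hinj : Function.Injective f) :
    IsOpenMap f ∧ Topology.IsOpenEmbedding f := by
  have hopen : IsOpenMap f := by
    rw [isOpenMap_iff_nhds_le]
    intro x S hS
    obtain ⟨p, hp⟩ := hM.exists_chart x
    obtain ⟨q, hq⟩ := hN.exists_chart (f x)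
    have hW : p.target ∩ p.symm ⁻¹' (f ⁻¹' (S ∩ q.source)) ∈ nhds (p x) := by
      refine Filter.inter_mem (p.open_target.mem_nhds (p.map_source hp)) ?_
      refine p.continuousAt_symm (p.map_source hp) ?_
      rw [p.left_inv hp]
      exact Filter.inter_mem hS (hf.continuousAt (q.open_source.mem_nhds hq))
    obtain ⟨R, hR, hRW⟩ := Metric.nhds_basis_closedBall.mem_iff.mp hW
    have himg := image_closedBall_mem_nhds (f := fun z => q (f (p.symm z))) hR
      (q.continuousOn.comp (hf.comp_continuousOn
        (p.continuousOn_symm.mono fun z hz => (hRW hz).1)) fun z hz => (hRW hz).2.2)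
      (fun z hz w hw hzw => p.symm.injOn (hRW hz).1 (hRW hw).1
        (hinj (q.injOn (hRW hz).2.2 (hRW hw).2.2 hzw)))
    rw [p.left_inv hp] at himg
    filter_upwards [q.continuousAt hq himg, q.open_source.mem_nhds hq] with y hy hyq
    obtain ⟨z, hz, hzy⟩ := hy
    rw [← q.injOn (hRW hz).2.2 hyq hzy]
    exact (hRW hz).2.1
  exact ⟨hopen, .of_continuous_injective_isOpenMap hf hinj hopen⟩
end

section
/- Let S be a Hausdorff topological space with a continuous binary operation · : S × S → S such that for every s ∈ S the left shift λ_s : S → S, x ↦ s·x, is injective and open. Let π : [0,1] → S be a continuous path, let U ⊆ S be an open set with compact closure Ū, and let V ⊆ S be a compact set such that π(0)·Ū ⊆ π(t)·V for every t ∈ [0,1]. Then there exists a continuous map H : [0,1] × U → S such that: π(t)·H(t,u) = π(0)·u for all t ∈ [0,1] and u ∈ U; H(0,u) = u for all u ∈ U; and for every t ∈ [0,1] the map u ↦ H(t,u) is an injective open map from U into S. In particular, the family (H(t,·))_{t∈[0,1]} is an open-isotopy connecting the identity embedding of U with the map u ↦ λ_{π(1)}⁻¹(π(0)·u). -/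
/-!
For each `t ∈ [0,1]` and `u ∈ U`, the point `H (t, u)` is the unique solution `x` of
`π(t)·x = π(0)·u`; the inclusion `π(0)·closure U ⊆ π(t)·V` places it in `V`. Continuity of `H` is
the closed graph principle for maps into a compact set: any cluster point `y` of `H` at `(t, u)`
satisfies `π(t)·y = π(0)·u` because the operation is continuous and `S` is Hausdorff, so
`y = H (t, u)` by injectivity of the shift. Since `H (t, ·) '' W` is the preimage of the open set
`π(0)·W` under the continuous shift by `π(t)`, each `H (t, ·)` is open.
-/

/-- Let `S` be Hausdorff with a continuous binary operation all of whose left shifts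
are injective and open, let `π : [0,1] → S` be a path, `U` open with compact closure,
and `V` compact with `π(0)·closure U ⊆ π(t)·V` for all `t ∈ [0,1]`. Then there is a
continuous `H : [0,1] × U → S` with `π(t)·H(t,u) = π(0)·u`, `H(0,u) = u`, each
`H(t,·)` being injective and open on `U`; i.e. `(H(t,·))` is an open-isotopy from the
identity of `U` to `u ↦ λ_{π(1)}⁻¹(π(0)·u)`. -/
theorem exists_openIsotopy_along_path
    {S : Type*} [TopologicalSpace S] [T2Space S]
    (mul : S → S → S) (hcont : Continuous fun p : S × S => mul p.1 p.2)
    (hinj : ∀ s : S, Function.Injective (mul s))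
    (hopen : ∀ s : S, IsOpenMap (mul s))
    (π : ℝ → S) (hπ : ContinuousOn π (Set.Icc (0:ℝ) 1))
    (U : Set S) (hU : IsOpen U) (hUc : IsCompact (closure U))
    (V : Set S) (hV : IsCompact V)
    (hsub : ∀ t ∈ Set.Icc (0:ℝ) 1, mul (π 0) '' closure U ⊆ mul (π t) '' V) :
    ∃ H : ℝ × S → S,
      ContinuousOn H (Set.Icc (0:ℝ) 1 ×ˢ U) ∧
      (∀ t ∈ Set.Icc (0:ℝ) 1, ∀ u ∈ U, mul (π t) (H (t, u)) = mul (π 0) u) ∧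
      (∀ u ∈ U, H (0, u) = u) ∧
      ∀ t ∈ Set.Icc (0:ℝ) 1,
        Set.InjOn (fun u => H (t, u)) U ∧
        ∀ W ⊆ U, IsOpen W → IsOpen ((fun u => H (t, u)) '' W) := by
  have hex : ∀ p : ℝ × S, ∃ x : S, p ∈ Set.Icc (0:ℝ) 1 ×ˢ U →
      x ∈ V ∧ mul (π p.1) x = mul (π 0) p.2 := by
    intro p
    by_cases hp : p ∈ Set.Icc (0:ℝ) 1 ×ˢ U
    · obtain ⟨x, hx, hxe⟩ := hsub p.1 hp.1 ⟨p.2, subset_closure hp.2, rfl⟩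
      exact ⟨x, fun _ => ⟨hx, hxe⟩⟩
    · exact ⟨p.2, fun h => absurd h hp⟩
  choose H hH using hex
  have hmul : ∀ t ∈ Set.Icc (0:ℝ) 1, ∀ u ∈ U, mul (π t) (H (t, u)) = mul (π 0) u :=
    fun t ht u hu => (hH (t, u) ⟨ht, hu⟩).2
  refine ⟨H, ?_, hmul, ?_, ?_⟩
  · rintro ⟨t, u⟩ ⟨ht, hu⟩
    refine hV.tendsto_nhds_of_unique_mapClusterPt
      (eventually_nhdsWithin_of_forall fun p hp => (hH p hp).1) fun y _ hy => ?_
    obtain ⟨F, hF, hFy⟩ := mapClusterPt_iff_ultrafilter.1 hy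
    have hmem : ∀ᶠ p in (F : Filter (ℝ × S)), p ∈ Set.Icc (0:ℝ) 1 ×ˢ U :=
      hF self_mem_nhdsWithin
    have hFn : (F : Filter (ℝ × S)) ≤ nhds (t, u) := hF.trans nhdsWithin_le_nhds
    have h1 : Filter.Tendsto (fun p : ℝ × S => p.1) F (nhds t) :=
      (continuous_fst.tendsto (t, u)).mono_left hFn
    have h2 : Filter.Tendsto (fun p : ℝ × S => p.2) F (nhds u) :=
      (continuous_snd.tendsto (t, u)).mono_left hFn
    have hπF : Filter.Tendsto (fun p : ℝ × S => π p.1) F (nhds (π t)) :=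
      (hπ t ht).tendsto.comp
        (tendsto_nhdsWithin_iff.2 ⟨h1, hmem.mono fun p hp => hp.1⟩)
    have hl : Filter.Tendsto (fun p : ℝ × S => mul (π p.1) (H p)) F (nhds (mul (π t) y)) :=
      (hcont.tendsto (π t, y)).comp (hπF.prodMk_nhds hFy)
    have hr : Filter.Tendsto (fun p : ℝ × S => mul (π 0) p.2) F (nhds (mul (π 0) u)) :=
      (hcont.tendsto (π 0, u)).comp (tendsto_const_nhds.prodMk_nhds h2)
    have heq : mul (π t) y = mul (π 0) u :=
      tendsto_nhds_unique (hl.congr' (hmem.mono fun p hp => (hH p hp).2)) hr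
    exact hinj (π t) (heq.trans (hmul t ht u hu).symm)
  · intro u hu
    exact hinj (π 0) (hmul 0 (by simp) u hu)
  · intro t ht
    refine ⟨fun u hu v hv huv => hinj (π 0) ?_, fun W hWU hW => ?_⟩
    · rw [← hmul t ht u hu, ← hmul t ht v hv]
      exact congrArg (mul (π t)) huv
    · have himg : (fun u => H (t, u)) '' W = mul (π t) ⁻¹' (mul (π 0) '' W) := by
        ext x
        constructor
        · rintro ⟨w, hw, rfl⟩
          exact ⟨w, hw, (hmul t ht w (hWU hw)).symm⟩
        · rintro ⟨w, hw, hwx⟩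
          exact ⟨w, hw, hinj (π t) ((hmul t ht w (hWU hw)).trans hwx)⟩
      rw [himg]
      exact (hopen (π 0) W hW).preimage (hcont.comp (Continuous.prodMk_right (π t)))
end
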